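/- Let g be a seven-dimensional real Lie algebra with a six-dimensional abelian ideal u and let e₇ ∈ g∖u. Then the following are equivalent: (i) there exists a closed four-form Ψ ∈ Λ⁴g* such that for some basis f¹,…,f⁷ of g*, Ψ = f^{1234}+f^{1256}+f^{3456}−f^{2467}+f^{2357}+f^{1457}+f^{1367} (i.e. g admits a cocalibrated G₂-structure); (ii) there exists a closed four-form Ω ∈ Λ⁴Ann(span(e₇)) of length l(Ω) = 3. -/

import Mathlib

open Module

section AltMachinery

variable {F : Type*} [Field F] {V : Type*} [AddCommGroup V] [Module F V]

/-- The wedge `φ₁ ∧ … ∧ φ_m` of `m` covectors, as an alternating `m`-form on `V`: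
`(φ₁ ∧ … ∧ φ_m)(v₁,…,v_m) = det (φ_i (v_j))`. -/
noncomputable def wedgeCov (m : ℕ) (φ : Fin m → Module.Dual F V) :
    V [⋀^Fin m]→ₗ[F] F :=
  (Matrix.detRowAlternating : (Fin m → F) [⋀^Fin m]→ₗ[F] F).compLinearMap
    (LinearMap.pi φ)

/-- A decomposable alternating `m`-form: a wedge of `m` covectors. -/
def AltDec (m : ℕ) (X : V [⋀^Fin m]→ₗ[F] F) : Prop :=
  ∃ φ : Fin m → Module.Dual F V, X = wedgeCov m φ

/-- The `m`-form `X` is a sum of `l` decomposable `m`-forms. -/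
def AltLenLE (m l : ℕ) (X : V [⋀^Fin m]→ₗ[F] F) : Prop :=
  ∃ Y : Fin l → (V [⋀^Fin m]→ₗ[F] F), (∀ i, AltDec m (Y i)) ∧ X = ∑ i, Y i

/-- The `m`-form `X` has length `l`: it is a sum of `l` decomposable `m`-forms and of no
smaller number of them. -/
def AltHasLen (m l : ℕ) (X : V [⋀^Fin m]→ₗ[F] F) : Prop :=
  AltLenLE m l X ∧ ∀ j < l, ¬ AltLenLE m j X

end AltMachinery

section CE

variable {F : Type*} [Field F] {g : Type*} [LieRing g] [LieAlgebra F g]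

/-- The Chevalley–Eilenberg differential of a `(k+1)`-form (given as a function on tuples):
`(dρ)(x₀,…,x_{k+1}) = ∑_{i<j} (-1)^{i+j} ρ(⁅x_i,x_j⁆, x₀,…,x̂_i,…,x̂_j,…,x_{k+1})`. -/
noncomputable def ceDiff (k : ℕ) (ρ : (Fin (k + 1) → g) → F) : (Fin (k + 2) → g) → F :=
  fun x => ∑ i : Fin (k + 2), ∑ j : Fin (k + 2),
    if h : (i : ℕ) < (j : ℕ) then
      (-1 : F) ^ ((i : ℕ) + (j : ℕ)) *
        ρ (Fin.cons ⁅x i, x j⁆ fun l : Fin k =>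
            x (j.succAbove ((⟨(i : ℕ),
              Nat.lt_of_lt_of_le h (Nat.lt_succ_iff.mp j.isLt)⟩ : Fin (k + 1)).succAbove l)))
    else 0

end CE

section G2Forms

variable {F : Type*} [Field F] {g : Type*} [AddCommGroup g] [Module F g]

/-- The wedge `f^i ∧ f^j ∧ f^k ∧ f^l` of four covectors from the basis `b` of `g*`. -/
noncomputable def bw (b : Basis (Fin 7) F (Module.Dual F g)) (i j k l : Fin 7) :
    g [⋀^Fin 4]→ₗ[F] F :=
  wedgeCov 4 ![b i, b j, b k, b l]

/-- The four-form `f^{1234}+f^{1256}+f^{3456}-f^{2467}+f^{2357}+f^{1457}+f^{1367}` (the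
Hodge dual of a `G₂`- resp. `(G₂)_ℂ`-structure), written with `0`-based indices. -/
noncomputable def stdG2 (b : Basis (Fin 7) F (Module.Dual F g)) : g [⋀^Fin 4]→ₗ[F] F :=
  bw b 0 1 2 3 + bw b 0 1 4 5 + bw b 2 3 4 5 - bw b 1 3 5 6 +
    bw b 1 2 4 6 + bw b 0 3 4 6 + bw b 0 2 5 6

/-- The four-form `f^{1234}-f^{1256}-f^{3456}-f^{2467}+f^{2357}+f^{1457}+f^{1367}` (the
Hodge dual of a `G₂*`-structure), written with `0`-based indices. -/
noncomputable def stdG2star (b : Basis (Fin 7) F (Module.Dual F g)) :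
    g [⋀^Fin 4]→ₗ[F] F :=
  bw b 0 1 2 3 - bw b 0 1 4 5 - bw b 2 3 4 5 - bw b 1 3 5 6 +
    bw b 1 2 4 6 + bw b 0 3 4 6 + bw b 0 2 5 6

/-- Membership in `Λ⁴W ⊆ Λ⁴g*` for a subspace `W ⊆ g*`: the span of the wedges of four
covectors from `W`. -/
def mem4Pow (W : Submodule F (Module.Dual F g)) (Ω : g [⋀^Fin 4]→ₗ[F] F) : Prop :=
  Ω ∈ Submodule.span F
    {Y : g [⋀^Fin 4]→ₗ[F] F |
      ∃ φ : Fin 4 → Module.Dual F g, (∀ i, φ i ∈ W) ∧ Y = wedgeCov 4 φ}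

end G2Forms

/-!
Let `θ` be the covector with kernel `u` and `θ e₇ = 1`. Since `u` is an abelian ideal,
`dρ = -θ ∧ (ad e₇ • ρ)`, so closedness of `ρ` depends only on `ρ|u`, and restriction to `u`
identifies `Λ⁴Ann(e₇)` with `Λ⁴u*`. Everything thus takes place on the six-dimensional space `u`,
where a volume form turns decomposable four-forms into decomposable bivectors `x ∧ y`, that is,
four-forms of length `l` into bivectors of rank `2l`.

A form of length three is therefore a multiple of `½(f₀₁ + f₂₃ + f₄₅)²`, which is the restriction
to `u` of the dual four-form of a `G₂`-structure. Conversely such a restriction has length at most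
three because `2 * 4 > 6`. If it had length at most two it would vanish on some hyperplane of `u`,
that is, on a common kernel `ker θ ∩ ker β`; but there it equals, up to a volume factor, the
contraction of the `G₂`-trivector with `θ`, `β` and a third covector, which for the third covector
`θ × β` is `|θ|²|β|² - ⟨θ, β⟩² > 0`.
-/

section ClosednessOnIdeal

variable {F : Type*} [Field F]

section CovectorWedge

variable {V N : Type*} [AddCommGroup V] [Module F V] [AddCommGroup N] [Module F N]

lemma alternatingMap_ext_of_span_eq_top {S : Set V} (hS : Submodule.span F S = ⊤) {n : ℕ}
    {ω ω' : V [⋀^Fin n]→ₗ[F] N} (h : ∀ v, (∀ i, v i ∈ S) → ω v = ω' v) : ω = ω' := by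
  induction n with
  | zero => ext v; exact h v (fun i => i.elim0)
  | succ n ih =>
    have hcurry : ω.curryLeft = ω'.curryLeft := LinearMap.ext_on hS fun x hx =>
      ih fun v hv => h (Matrix.vecCons x v) (Fin.cases hx hv)
    ext v
    rw [← Matrix.cons_head_tail v]
    exact congr($hcurry (Matrix.vecHead v) (Matrix.vecTail v))

/-- The exterior product `θ ∧ σ` of a covector and an alternating form,
`(θ ∧ σ)(v₀, …, v_n) = ∑ᵢ (-1)ⁱ θ(vᵢ) σ(v₀, …, v̂ᵢ, …, v_n)`. -/
def covectorWedge (θ : Dual F V) {n : ℕ} (σ : V [⋀^Fin n]→ₗ[F] N) : V [⋀^Fin (n + 1)]→ₗ[F] N :=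
  AlternatingMap.alternatizeUncurryFin (θ.smulRight σ)

lemma span_ker_union_singleton {θ : Dual F V} {e : V} (he : θ e = 1) :
    Submodule.span F ((LinearMap.ker θ : Set V) ∪ {e}) = ⊤ := by
  refine eq_top_iff.2 fun x _ => ?_
  have hx : x - θ x • e ∈ LinearMap.ker θ := by simp [he]
  rw [← sub_add_cancel x (θ x • e)]
  exact add_mem (Submodule.subset_span (.inl hx))
    (Submodule.smul_mem _ _ (Submodule.subset_span (.inr rfl)))

lemma covectorWedge_congr {θ : Dual F V} {e : V} (he : θ e = 1) {n : ℕ}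
    {σ σ' : V [⋀^Fin n]→ₗ[F] N} (h : ∀ v, (∀ i, θ (v i) = 0) → σ v = σ' v) :
    covectorWedge θ σ = covectorWedge θ σ' := by
  refine alternatingMap_ext_of_span_eq_top (span_ker_union_singleton he) fun v hv => ?_
  by_cases hinj : Function.Injective v
  · simp only [covectorWedge, AlternatingMap.alternatizeUncurryFin_apply]
    refine Finset.sum_congr rfl fun i _ => ?_
    rcases hv i with hi | hi
    · simp [LinearMap.mem_ker.1 hi]
    · have hrest : ∀ j, θ (v (i.succAbove j)) = 0 := fun j =>
        (hv (i.succAbove j)).resolve_right fun hj => i.succAbove_ne j (hinj (hj.trans hi.symm))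
      simp [h (i.removeNth v) hrest]
  · simp only [AlternatingMap.map_eq_zero_of_not_injective _ _ hinj]

/-- The action of an endomorphism `D` on alternating forms as a derivation,
`(D • ρ)(v₀, …, v_n) = ∑ᵢ ρ(v₀, …, D vᵢ, …, v_n)`, each `D vᵢ` being moved to the front. -/
def derivationAction (D : V →ₗ[F] V) {n : ℕ} (ρ : V [⋀^Fin (n + 1)]→ₗ[F] N) :
    V [⋀^Fin (n + 1)]→ₗ[F] N :=
  AlternatingMap.alternatizeUncurryFin (ρ.curryLeft ∘ₗ D)

end CovectorWedge

variable {g : Type*} [LieRing g]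

lemma ceDiff_eq_neg_sum (k : ℕ) (ρ : (Fin (k + 1) → g) → F) (v : Fin (k + 2) → g) :
    ceDiff k ρ v = -∑ i : Fin (k + 1), ∑ j ≥ i, (-1 : ℤ) ^ (i + j : ℕ) •
      ρ (Matrix.vecCons ⁅v i.castSucc, v j.succ⁆ (j.removeNth (i.castSucc.removeNth v))) := by
  simp only [ceDiff]
  rw [Fin.sum_univ_castSucc, Finset.sum_eq_zero (f := fun j => dite _ _ _), add_zero,
    ← Finset.sum_neg_distrib]
  · refine Finset.sum_congr rfl fun i _ => ?_
    rw [Fin.sum_univ_succ, dif_neg (by simp), zero_add, ← Finset.sum_neg_distrib,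
      ← Finset.sum_subset (Finset.subset_univ (Finset.Ici i))]
    · refine Finset.sum_congr rfl fun j hj => ?_
      have hij : i ≤ j := Finset.mem_Ici.mp hj
      have hremove : j.succ.succAbove ∘ i.succAbove = i.castSucc.succAbove ∘ j.succAbove := by
        ext l
        simp only [Function.comp, Fin.succAbove, Fin.lt_def, Fin.le_def] at hij ⊢
        grind
      rw [dif_pos (by simpa [Nat.lt_succ_iff] using hij)]
      simp only [Fin.val_castSucc, Fin.val_succ, Fin.eta]
      have hv : (fun l => v (j.succ.succAbove (i.succAbove l))) =
          j.removeNth (i.castSucc.removeNth v) := congrArg (v ∘ ·) hremove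
      rw [hv]
      simp [Matrix.vecCons, pow_succ, ← add_assoc]
    · intro j _ hj
      exact dif_neg (by simpa [Nat.lt_succ_iff] using hj)
  · intro j _
    exact dif_neg (by simpa using j.is_le)

lemma ceDiff_smul (k : ℕ) (c : F) (ρ : (Fin (k + 1) → g) → F) :
    ceDiff k (c • ρ) = c • ceDiff k ρ := by
  ext v
  simp only [ceDiff_eq_neg_sum, Pi.smul_apply, smul_neg, Finset.smul_sum, smul_comm c]

variable [LieAlgebra F g]

lemma lie_eq_of_isAbelian_ker {θ : Dual F g} {e : g} (he : θ e = 1)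
    (hab : ∀ x y, θ x = 0 → θ y = 0 → ⁅x, y⁆ = 0) (x y : g) :
    ⁅x, y⁆ = θ x • ⁅e, y⁆ - θ y • ⁅e, x⁆ := by
  have h := hab (x - θ x • e) (y - θ y • e) (by simp [he]) (by simp [he])
  rw [← sub_eq_zero, ← h]
  simp only [lie_sub, sub_lie, lie_smul, smul_lie, lie_self, smul_zero, sub_zero]
  rw [← lie_skew e x, smul_neg]
  abel

lemma ceDiff_eq_neg_covectorWedge {θ : Dual F g} {e : g} (he : θ e = 1)
    (hab : ∀ x y, θ x = 0 → θ y = 0 → ⁅x, y⁆ = 0) {k : ℕ} (ρ : g [⋀^Fin (k + 1)]→ₗ[F] F) :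
    ceDiff k ρ = -covectorWedge θ (derivationAction (LieAlgebra.ad F g e) ρ) := by
  set D : g →ₗ[F] g := LieAlgebra.ad F g e
  have hcomp : θ.smulRight (derivationAction D ρ) =
      AlternatingMap.alternatizeUncurryFinLM ∘ₗ θ.smulRight (ρ.curryLeft ∘ₗ D) := by
    ext x v
    simp [derivationAction]
  ext v
  rw [ceDiff_eq_neg_sum, covectorWedge, hcomp, Pi.neg_apply,
    AlternatingMap.alternatizeUncurryFin_alternatizeUncurryFinLM_comp_apply]
  congr! 6 with i _ j _
  rw [lie_eq_of_isAbelian_ker he hab]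
  simp only [← AlternatingMap.curryLeft_apply_apply, map_sub, map_smul]
  simp [D]

lemma ceDiff_congr {θ : Dual F g} {e : g} (he : θ e = 1)
    (hab : ∀ x y, θ x = 0 → θ y = 0 → ⁅x, y⁆ = 0) (hideal : ∀ x, θ x = 0 → θ ⁅e, x⁆ = 0)
    {k : ℕ} {ρ σ : g [⋀^Fin (k + 1)]→ₗ[F] F}
    (h : ρ.compLinearMap (LinearMap.ker θ).subtype = σ.compLinearMap (LinearMap.ker θ).subtype) :
    ceDiff k ρ = ceDiff k σ := by
  have hρσ (v : Fin (k + 1) → g) (hv : ∀ i, θ (v i) = 0) : ρ v = σ v :=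
    congr($h fun i => ⟨v i, hv i⟩)
  rw [ceDiff_eq_neg_covectorWedge he hab, ceDiff_eq_neg_covectorWedge he hab]
  congr 2
  refine covectorWedge_congr he fun v hv => ?_
  simp only [derivationAction, AlternatingMap.alternatizeUncurryFin_apply]
  refine Finset.sum_congr rfl fun i _ => congrArg _ (hρσ _ (Fin.cases ?_ fun j => ?_))
  · exact hideal _ (hv i)
  · exact hv (i.succAbove j)

end ClosednessOnIdeal

section DecomposableForms

variable {F : Type*} [Field F] {V W : Type*} [AddCommGroup V] [Module F V]
  [AddCommGroup W] [Module F W] {k l m : ℕ}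

lemma wedgeCov_smul (c : Fin k → F) (φ : Fin k → Dual F V) :
    wedgeCov k (fun i => c i • φ i) = (∏ i, c i) • wedgeCov k φ := by
  ext v
  exact Matrix.det_mul_row c (Matrix.of fun i j => φ j (v i))

lemma wedgeCov_compLinearMap (φ : Fin k → Dual F V) (f : W →ₗ[F] V) :
    (wedgeCov k φ).compLinearMap f = wedgeCov k fun i => φ i ∘ₗ f := rfl

lemma wedgeCov_eq_zero_of_not_linearIndependent {φ : Fin k → Dual F V}
    (hφ : ¬LinearIndependent F φ) : wedgeCov k φ = 0 := by
  obtain ⟨c, hc, hc0⟩ : ∃ c : Fin k → F, ∑ i, c i • φ i = 0 ∧ c ≠ 0 := by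
    simpa [Fintype.linearIndependent_iff, funext_iff] using hφ
  ext v
  refine Matrix.exists_mulVec_eq_zero_iff.1 ⟨c, hc0, ?_⟩
  ext i
  simpa [Matrix.mulVec, dotProduct, mul_comm] using congr($hc (v i))

namespace AltDec

lemma smul [NeZero k] {X : V [⋀^Fin k]→ₗ[F] F} (hX : AltDec k X) (a : F) : AltDec k (a • X) := by
  obtain ⟨φ, rfl⟩ := hX
  refine ⟨fun i => (Pi.mulSingle 0 a : Fin k → F) i • φ i, ?_⟩
  rw [wedgeCov_smul, Finset.prod_pi_mulSingle']
  simp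

lemma compLinearMap {X : V [⋀^Fin k]→ₗ[F] F} (hX : AltDec k X) (f : W →ₗ[F] V) :
    AltDec k (X.compLinearMap f) := by
  obtain ⟨φ, rfl⟩ := hX
  exact ⟨_, wedgeCov_compLinearMap φ f⟩

end AltDec

lemma sum_compLinearMap {ι : Type*} (s : Finset ι) (Y : ι → V [⋀^Fin k]→ₗ[F] F) (f : W →ₗ[F] V) :
    (∑ i ∈ s, Y i).compLinearMap f = ∑ i ∈ s, (Y i).compLinearMap f :=
  map_sum (AddMonoidHom.mk' (fun X : V [⋀^Fin k]→ₗ[F] F => X.compLinearMap f) fun _ _ => rfl) Y s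

lemma AltLenLE.compLinearMap {X : V [⋀^Fin k]→ₗ[F] F} (hX : AltLenLE k l X) (f : W →ₗ[F] V) :
    AltLenLE k l (X.compLinearMap f) := by
  obtain ⟨Y, hY, rfl⟩ := hX
  exact ⟨fun i => (Y i).compLinearMap f, fun i => (hY i).compLinearMap f, sum_compLinearMap ..⟩

end DecomposableForms

section Contraction

lemma castAdd_ne_natAdd {m k : ℕ} (i : Fin m) (j : Fin k) : i.castAdd k ≠ j.natAdd m :=
  Fin.ne_of_lt (i.isLt.trans_le (Nat.le_add_right m j))

lemma append_update_left {α : Type*} {m k : ℕ} [DecidableEq (Fin m)] (x : Fin m → α)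
    (v : Fin k → α) (i : Fin m) (a : α) :
    Fin.append (Function.update x i a) v = Function.update (Fin.append x v) (i.castAdd k) a := by
  ext j
  refine Fin.addCases (fun j => ?_) (fun j => ?_) j
  · by_cases h : j = i <;> simp [h]
  · simp [Function.update_of_ne (castAdd_ne_natAdd i j).symm]

lemma append_update_right {α : Type*} {m k : ℕ} [DecidableEq (Fin k)] (x : Fin m → α)
    (v : Fin k → α) (i : Fin k) (a : α) :
    Fin.append x (Function.update v i a) = Function.update (Fin.append x v) (i.natAdd m) a := by
  ext j
  refine Fin.addCases (fun j => ?_) (fun j => ?_) j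
  · simp [Function.update_of_ne (castAdd_ne_natAdd j i)]
  · by_cases h : j = i <;> simp [h]

variable {F : Type*} [Field F] {V N : Type*} [AddCommGroup V] [Module F V]
  [AddCommGroup N] [Module F N] {k m : ℕ}

/-- Contraction of an alternating form with `x₁ ∧ … ∧ x_m`: the vectors `x` fill its first
`m` arguments. For a volume form `ω` its values are exactly the decomposable `k`-forms. -/
def contract (ω : V [⋀^Fin (m + k)]→ₗ[F] N) : V [⋀^Fin m]→ₗ[F] (V [⋀^Fin k]→ₗ[F] N) where
  toFun x :=
    { toFun v := ω (Fin.append x v)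
      map_update_add' v i a b := by simp only [append_update_right, ω.map_update_add]
      map_update_smul' v i c a := by simp only [append_update_right, ω.map_update_smul]
      map_eq_zero_of_eq' v i j h hij :=
        ω.map_eq_zero_of_eq _ (i := i.natAdd m) (j := j.natAdd m) (by simpa using h)
          (by simpa using hij) }
  map_update_add' x i a b := by
    ext v
    simp [append_update_left]
  map_update_smul' x i c a := by
    ext v
    simp [append_update_left]
  map_eq_zero_of_eq' x i j h hij := by
    ext v
    exact ω.map_eq_zero_of_eq _ (i := i.castAdd k) (j := j.castAdd k) (by simpa using h)
      (by simpa using hij)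

lemma contract_apply (ω : V [⋀^Fin (m + k)]→ₗ[F] N) (x : Fin m → V) (v : Fin k → V) :
    contract ω x v = ω (Fin.append x v) := rfl

lemma contract_basis_castAdd (d : Basis (Fin (m + k)) F V) (vol : V [⋀^Fin (m + k)]→ₗ[F] F) :
    contract vol (d ∘ Fin.castAdd k) = vol d • wedgeCov k (d.coord ∘ Fin.natAdd m) := by
  ext v
  have hblocks : (d.toMatrix (Fin.append (d ∘ Fin.castAdd k) v)).submatrix
      finSumFinEquiv finSumFinEquiv =
      Matrix.fromBlocks 1 (d.toMatrix v |>.submatrix (Fin.castAdd k) id) 0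
        (Matrix.of fun i j => d.coord (Fin.natAdd m j) (v i)).transpose := by
    ext (i | i) (j | j) <;>
      simp [Basis.toMatrix_apply, Matrix.one_apply, Finsupp.single_apply, castAdd_ne_natAdd,
        eq_comm]
  rw [contract_apply, vol.eq_smul_basis_det d]
  simp only [AlternatingMap.smul_apply, d.det_self, smul_eq_mul, mul_one]
  rw [Basis.det_apply, ← Matrix.det_submatrix_equiv_self finSumFinEquiv, hblocks,
    Matrix.det_fromBlocks_zero₂₁, Matrix.det_one, one_mul, Matrix.det_transpose]
  rfl

lemma contract_apply_basis_natAdd (d : Basis (Fin (m + k)) F V) (vol : V [⋀^Fin (m + k)]→ₗ[F] F)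
    (x : Fin m → V) :
    contract vol x (d ∘ Fin.natAdd m) = vol d * wedgeCov m (d.coord ∘ Fin.castAdd k) x := by
  have hblocks : (d.toMatrix (Fin.append x (d ∘ Fin.natAdd m))).submatrix
      finSumFinEquiv finSumFinEquiv =
      Matrix.fromBlocks (Matrix.of fun i j => d.coord (Fin.castAdd k j) (x i)).transpose 0
        (d.toMatrix x |>.submatrix (Fin.natAdd m) id) 1 := by
    ext (i | i) (j | j) <;>
      simp [Basis.toMatrix_apply, Matrix.one_apply, Finsupp.single_apply, castAdd_ne_natAdd,
        eq_comm]
  rw [contract_apply, vol.eq_smul_basis_det d]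
  simp only [AlternatingMap.smul_apply, d.det_self, smul_eq_mul, mul_one]
  rw [Basis.det_apply, ← Matrix.det_submatrix_equiv_self finSumFinEquiv, hblocks,
    Matrix.det_fromBlocks_zero₁₂, Matrix.det_one, mul_one, Matrix.det_transpose]
  rfl

lemma contract_basis_perm (d : Basis (Fin (m + k)) F V) (vol : V [⋀^Fin (m + k)]→ₗ[F] F)
    (π : Equiv.Perm (Fin (m + k))) :
    contract vol (d ∘ π ∘ Fin.castAdd k) =
      π.sign • vol d • wedgeCov k (d.coord ∘ π ∘ Fin.natAdd m) := by
  have h := contract_basis_castAdd (d.reindex π.symm) vol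
  have hcoord : (d.reindex π.symm).coord = d.coord ∘ π := by
    ext i; simp
  rw [hcoord, Basis.coe_reindex, π.symm_symm, vol.map_perm] at h
  simp only [Function.comp_assoc] at h
  rw [h]
  obtain hs | hs := Int.units_eq_one_or π.sign <;> rw [hs]
  · simp only [one_smul]
  · simp only [Units.neg_smul, one_smul]
    exact neg_smul (vol d) (wedgeCov k (d.coord ∘ π ∘ Fin.natAdd m))

lemma exists_basis_sum_inl {ι κ : Type*} [Fintype ι] [Fintype κ] [FiniteDimensional F V]
    (hV : finrank F V = Fintype.card ι + Fintype.card κ) {v : ι → V} (hv : LinearIndependent F v) :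
    ∃ b : Basis (ι ⊕ κ) F V, ∀ i, b (Sum.inl i) = v i := by
  have := Module.Finite.finite_basis (Basis.sumExtend hv)
  have : Finite (Basis.sumExtendIndex hv) := Finite.of_injective _ (Sum.inr_injective (α := ι))
  have := Fintype.ofFinite (Basis.sumExtendIndex hv)
  have hcard : Fintype.card (Basis.sumExtendIndex hv) = Fintype.card κ := by
    have := finrank_eq_card_basis (Basis.sumExtend hv)
    rw [hV, Fintype.card_sum] at this
    omega
  refine ⟨(Basis.sumExtend hv).reindex (.sumCongr (.refl _) (Fintype.equivOfCardEq hcard)),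
    fun i => ?_⟩
  simp only [Basis.sumExtend, Basis.coe_reindex, Basis.coe_extend, Equiv.trans_def,
    Equiv.sumCongr_symm, Equiv.refl_symm, Function.comp_apply, Equiv.sumCongr_apply,
    Equiv.coe_refl, Sum.map_inl, id_eq]
  rfl

lemma exists_basis_coord_eq {ι : Type*} [Finite ι] [FiniteDimensional F V]
    (b : Basis ι F (Dual F V)) : ∃ c : Basis ι F V, c.coord = b := by
  classical
  refine ⟨b.dualBasis.map (evalEquiv F V).symm, ?_⟩
  ext i : 1
  refine (b.dualBasis.map (evalEquiv F V).symm).ext fun j => ?_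
  rw [Basis.coord_apply, Basis.repr_self, Basis.map_apply, apply_evalEquiv_symm_apply,
    Basis.dualBasis_apply_self, Finsupp.single_apply]
  exact if_congr eq_comm rfl rfl

lemma exists_basis_coord_inl {ι κ : Type*} [Fintype ι] [Fintype κ] [FiniteDimensional F V]
    (hV : finrank F V = Fintype.card ι + Fintype.card κ)
    {φ : ι → Dual F V} (hφ : LinearIndependent F φ) :
    ∃ d : Basis (ι ⊕ κ) F V, ∀ i, d.coord (Sum.inl i) = φ i := by
  obtain ⟨b, hb⟩ := exists_basis_sum_inl (κ := κ) (Subspace.dual_finrank_eq.trans hV) hφ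
  obtain ⟨d, hd⟩ := exists_basis_coord_eq b
  exact ⟨d, fun i => hd ▸ hb i⟩

variable [FiniteDimensional F V]

lemma altDec_contract [NeZero k] (hV : finrank F V = m + k) (vol : V [⋀^Fin (m + k)]→ₗ[F] F)
    (x : Fin m → V) : AltDec k (contract vol x) := by
  by_cases hx : LinearIndependent F x
  · obtain ⟨b, hb⟩ := exists_basis_sum_inl (κ := Fin k) (by simpa using hV) hx
    have hb' : x = b.reindex finSumFinEquiv ∘ Fin.castAdd k := by
      ext i; simp [hb]
    rw [hb', contract_basis_castAdd]
    exact AltDec.smul ⟨_, rfl⟩ _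
  · rw [AlternatingMap.map_linearDependent _ _ hx]
    refine ⟨0, (wedgeCov_eq_zero_of_not_linearIndependent fun h => h.ne_zero 0 rfl).symm⟩

lemma AltDec.exists_eq_contract [NeZero m] (hV : finrank F V = m + k)
    {vol : V [⋀^Fin (m + k)]→ₗ[F] F} (hvol : vol ≠ 0) {Y : V [⋀^Fin k]→ₗ[F] F}
    (hY : AltDec k Y) : ∃ x : Fin m → V, Y = contract vol x := by
  obtain ⟨φ, rfl⟩ := hY
  by_cases hφ : LinearIndependent F φ
  · obtain ⟨b, hb⟩ := exists_basis_coord_inl (κ := Fin m) (by simpa [add_comm] using hV) hφ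
    let d := b.reindex ((Equiv.sumComm _ _).trans finSumFinEquiv)
    have hd : φ = d.coord ∘ Fin.natAdd m := by
      ext i
      simp only [← hb, d, Function.comp, Basis.coord_apply, Basis.repr_reindex_apply]
      simp
    have hvold : vol d ≠ 0 := mt (AlternatingMap.map_basis_eq_zero_iff d vol).1 hvol
    refine ⟨Function.update (d ∘ Fin.castAdd k) 0 ((vol d)⁻¹ • (d ∘ Fin.castAdd k) 0), ?_⟩
    rw [AlternatingMap.map_update_smul, Function.update_eq_self, contract_basis_castAdd,
      inv_smul_smul₀ hvold, hd]
  · exact ⟨0, by rw [wedgeCov_eq_zero_of_not_linearIndependent hφ, AlternatingMap.map_zero]⟩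

end Contraction

section AlternatingBilinear

variable {F : Type*} [Field F] {U N : Type*} [AddCommGroup U] [Module F U]
  [AddCommGroup N] [Module F N]

/-- An alternating two-form as a bilinear map, the form in which sums `∑ β(xᵢ, yᵢ)` are shortened
below. -/
def toBilin (β : U [⋀^Fin 2]→ₗ[F] N) : U →ₗ[F] U →ₗ[F] N :=
  LinearMap.mk₂ F (fun x y => β ![x, y]) (fun _ _ _ => β.map_vecCons_add _ _ _)
    (fun _ _ _ => β.map_vecCons_smul _ _ _)
    (fun x => (β.curryLeft x).map_vecCons_add ![]) fun c x => (β.curryLeft x).map_vecCons_smul ![] c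

lemma isAlt_toBilin (β : U [⋀^Fin 2]→ₗ[F] N) : (toBilin β).IsAlt :=
  fun x => β.map_eq_zero_of_eq ![x, x] (i := 0) (j := 1) rfl (by decide)

variable {G : U →ₗ[F] U →ₗ[F] N} {n : ℕ}

lemma isAlt_apply_add_apply_eq (hG : G.IsAlt) (x y z : U) (a b : F) :
    G x y + G z (a • x + b • y) = G (x + b • z) (y - a • z) := by
  have hzx : G x z = -G z x := by rw [← hG.neg]
  simp only [map_add, map_sub, map_smul, LinearMap.add_apply, LinearMap.smul_apply, hG z, hzx,
    smul_zero, add_zero, smul_neg, sub_neg_eq_add]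
  abel

lemma exists_sum_reduce_of_ne_zero (hG : G.IsAlt) (x y : Fin (n + 1) → U) (a b : Fin (n + 1) → F)
    (hab : ∑ i, a i • x i + ∑ i, b i • y i = 0) {k : Fin (n + 1)} (hk : b k ≠ 0) :
    ∃ x' y' : Fin n → U, ∑ i, G (x i) (y i) = ∑ i, G (x' i) (y' i) := by
  let s : Fin n → F := fun i => -(b k)⁻¹ * a (k.succAbove i)
  let t : Fin n → F := fun i => -(b k)⁻¹ * b (k.succAbove i)
  have hyk : y k = (-(b k)⁻¹ * a k) • x k +
      ∑ i, (s i • x (k.succAbove i) + t i • y (k.succAbove i)) := by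
    rw [Fin.sum_univ_succAbove _ k, Fin.sum_univ_succAbove _ k] at hab
    rw [← sub_eq_zero]
    have hscaled := congr((b k)⁻¹ • $hab)
    simp only [smul_add, smul_zero, smul_smul, Finset.smul_sum, inv_mul_cancel₀ hk,
      one_smul] at hscaled
    simp only [s, t, Finset.sum_add_distrib, neg_mul, neg_smul, Finset.sum_neg_distrib]
    rw [← hscaled]
    abel
  refine ⟨fun i => x (k.succAbove i) + t i • x k, fun i => y (k.succAbove i) - s i • x k, ?_⟩
  simp only [← isAlt_apply_add_apply_eq hG]
  rw [Fin.sum_univ_succAbove _ k, Finset.sum_add_distrib, ← map_sum, add_comm]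
  conv_lhs => rw [hyk]
  simp [hG (x k)]

lemma exists_sum_reduce (hG : G.IsAlt) {x y : Fin (n + 1) → U}
    (hxy : ¬LinearIndependent F (Sum.elim x y)) :
    ∃ x' y' : Fin n → U, ∑ i, G (x i) (y i) = ∑ i, G (x' i) (y' i) := by
  obtain ⟨c, hc, i, hi⟩ := Fintype.not_linearIndependent_iff.1 hxy
  simp only [Fintype.sum_sum_type, Sum.elim_inl, Sum.elim_inr] at hc
  rcases i with i | i
  · obtain ⟨x', y', h⟩ := exists_sum_reduce_of_ne_zero hG y (fun i => -x i)
      (fun i => c (.inr i)) (fun i => -c (.inl i)) (by simpa [add_comm] using hc)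
      (k := i) (neg_ne_zero.2 hi)
    exact ⟨x', y', by rw [← h]; simp [hG.neg]⟩
  · exact exists_sum_reduce_of_ne_zero hG x y _ _ hc hi

lemma exists_sum_eq_of_finrank_lt [FiniteDimensional F U] (hG : G.IsAlt) {m : ℕ}
    (hm : finrank F U < 2 * (m + 1)) (hmn : m ≤ n) (x y : Fin n → U) :
    ∃ x' y' : Fin m → U, ∑ i, G (x i) (y i) = ∑ i, G (x' i) (y' i) := by
  induction n, hmn using Nat.le_induction with
  | base => exact ⟨x, y, rfl⟩
  | succ n hmn ih =>
    have hdep : ¬LinearIndependent F (Sum.elim x y) := fun h => by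
      have := h.fintype_card_le_finrank
      rw [Fintype.card_sum, Fintype.card_fin] at this
      omega
    obtain ⟨x₁, y₁, h₁⟩ := exists_sum_reduce hG hdep
    obtain ⟨x', y', h⟩ := ih x₁ y₁
    exact ⟨x', y', h₁.trans h⟩

end AlternatingBilinear

section Length

variable {F : Type*} [Field F] {U : Type*} [AddCommGroup U] [Module F U] [FiniteDimensional F U]
  {k l m n : ℕ}

lemma exists_alternating_ne_zero (hU : finrank F U = n) :
    ∃ vol : U [⋀^Fin n]→ₗ[F] F, vol ≠ 0 :=
  ⟨(finBasisOfFinrankEq F U hU).det, Basis.det_ne_zero _⟩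

lemma AltLenLE.exists_eq_sum_contract [NeZero m] (hU : finrank F U = m + k)
    {vol : U [⋀^Fin (m + k)]→ₗ[F] F} (hvol : vol ≠ 0) {Ω : U [⋀^Fin k]→ₗ[F] F}
    (hΩ : AltLenLE k l Ω) : ∃ x : Fin l → Fin m → U, Ω = ∑ i, contract vol (x i) := by
  obtain ⟨Y, hY, rfl⟩ := hΩ
  choose x hx using fun i => (hY i).exists_eq_contract hU hvol
  exact ⟨x, by simp only [hx]⟩

lemma AltLenLE.exists_eq_sum_toBilin (hU : finrank F U = 2 + k)
    {vol : U [⋀^Fin (2 + k)]→ₗ[F] F} (hvol : vol ≠ 0) {Ω : U [⋀^Fin k]→ₗ[F] F}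
    (hΩ : AltLenLE k l Ω) :
    ∃ x y : Fin l → U, Ω = ∑ i, toBilin (contract vol) (x i) (y i) := by
  obtain ⟨z, rfl⟩ := hΩ.exists_eq_sum_contract hU hvol
  refine ⟨fun i => z i 0, fun i => z i 1, Finset.sum_congr rfl fun i _ => ?_⟩
  exact congrArg (contract vol) (List.ofFn_injective rfl)

lemma altLenLE_sum_toBilin [NeZero k] (hU : finrank F U = 2 + k)
    (vol : U [⋀^Fin (2 + k)]→ₗ[F] F) (x y : Fin l → U) :
    AltLenLE k l (∑ i, toBilin (contract vol) (x i) (y i)) :=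
  ⟨_, fun i => altDec_contract hU vol ![x i, y i], rfl⟩

lemma linearIndependent_of_not_altLenLE [NeZero k] (hU : finrank F U = 2 + k)
    (vol : U [⋀^Fin (2 + k)]→ₗ[F] F) {x y : Fin (n + 1) → U}
    (h : ¬AltLenLE k n (∑ i, toBilin (contract vol) (x i) (y i))) :
    LinearIndependent F (Sum.elim x y) := by
  by_contra hdep
  obtain ⟨x', y', hred⟩ := exists_sum_reduce (isAlt_toBilin (contract vol)) hdep
  exact h (hred ▸ altLenLE_sum_toBilin hU vol x' y')

lemma AltLenLE.of_finrank_lt [NeZero k] (hU : finrank F U = 2 + k) {Ω : U [⋀^Fin k]→ₗ[F] F}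
    (hΩ : AltLenLE k n Ω) (hl : finrank F U < 2 * (l + 1)) (hln : l ≤ n) : AltLenLE k l Ω := by
  obtain ⟨vol, hvol⟩ := exists_alternating_ne_zero hU
  obtain ⟨x, y, rfl⟩ := hΩ.exists_eq_sum_toBilin hU hvol
  obtain ⟨x', y', h⟩ := exists_sum_eq_of_finrank_lt (isAlt_toBilin (contract vol)) hl hln x y
  exact h ▸ altLenLE_sum_toBilin hU vol x' y'

lemma AltLenLE.exists_ker_vanishing [NeZero m] (hU : finrank F U = m + k)
    {Ω : U [⋀^Fin k]→ₗ[F] F} (hΩ : AltLenLE k l Ω) (hl : l * m < finrank F U) :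
    ∃ α : Dual F U, α ≠ 0 ∧ ∀ v, (∀ i, α (v i) = 0) → Ω v = 0 := by
  obtain ⟨vol, hvol⟩ := exists_alternating_ne_zero hU
  obtain ⟨x, rfl⟩ := hΩ.exists_eq_sum_contract hU hvol
  have hspan : Submodule.span F (Set.range fun p : Fin l × Fin m => x p.1 p.2) < ⊤ := by
    refine lt_top_iff_ne_top.2 fun h => ?_
    have := finrank_range_le_card (R := F) fun p : Fin l × Fin m => x p.1 p.2
    rw [Set.finrank, h, finrank_top, Fintype.card_prod, Fintype.card_fin, Fintype.card_fin] at this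
    omega
  obtain ⟨α, hα, hker⟩ := Submodule.exists_le_ker_of_lt_top _ hspan
  refine ⟨α, hα, fun v hv => ?_⟩
  have hzero : ∀ i, contract vol (x i) v = 0 := fun i => by
    refine vol.map_linearDependent _ fun hLI => hα ?_
    refine LinearMap.ext_on_range (hLI.span_eq_top_of_card_eq_finrank' (by simp [hU])) ?_
    exact Fin.addCases (fun j => by simpa using hker (Submodule.subset_span ⟨(i, j), rfl⟩))
      fun j => by simpa using hv j
  exact Finset.sum_induction _ (fun Z : U [⋀^Fin k]→ₗ[F] F => Z v = 0)
    (fun _ _ h h' => by simp [h, h']) rfl fun i _ => hzero i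

end Length

section NormalForm

variable {F : Type*} [Field F] {U : Type*} [AddCommGroup U] [Module F U]

/-- Half the square of the two-form `f₀ ∧ f₁ + f₂ ∧ f₃ + f₄ ∧ f₅`, which for a basis `f` is the
normal form, up to scaling, of a four-form of length three in dimension six. -/
noncomputable def halfSymplecticSq (f : Fin 6 → Dual F U) : U [⋀^Fin 4]→ₗ[F] F :=
  wedgeCov 4 ![f 0, f 1, f 2, f 3] + wedgeCov 4 ![f 0, f 1, f 4, f 5] +
    wedgeCov 4 ![f 2, f 3, f 4, f 5]

lemma sum_toBilin_contract_basis (vol : U [⋀^Fin 6]→ₗ[F] F) (c : Basis (Fin 6) F U) :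
    ∑ i, toBilin (contract (m := 2) (k := 4) vol) (c (![0, 2, 4] i)) (c (![1, 3, 5] i)) =
      vol c • halfSymplecticSq c.coord := by
  have h (π : Equiv.Perm (Fin 6)) : contract (m := 2) (k := 4) vol ![c (π 0), c (π 1)] =
      π.sign • vol c •
        wedgeCov 4 ![c.coord (π 2), c.coord (π 3), c.coord (π 4), c.coord (π 5)] := by
    have hl : ![c (π 0), c (π 1)] = c ∘ π ∘ Fin.castAdd 4 := List.ofFn_injective rfl
    have hr : ![c.coord (π 2), c.coord (π 3), c.coord (π 4), c.coord (π 5)] =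
        c.coord ∘ π ∘ Fin.natAdd 2 := List.ofFn_injective rfl
    rw [hl, hr, contract_basis_perm (m := 2) (k := 4)]
  let π₁ : Equiv.Perm (Fin 6) := ⟨![2, 3, 0, 1, 4, 5], ![2, 3, 0, 1, 4, 5], by decide, by decide⟩
  let π₂ : Equiv.Perm (Fin 6) := ⟨![4, 5, 0, 1, 2, 3], ![2, 3, 4, 5, 0, 1], by decide, by decide⟩
  have h₀ := h 1
  have h₁ := h π₁
  have h₂ := h π₂
  rw [Equiv.Perm.sign_one, one_smul] at h₀
  rw [show π₁.sign = 1 by decide, one_smul] at h₁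
  rw [show π₂.sign = 1 by decide, one_smul] at h₂
  rw [Fin.sum_univ_three, halfSymplecticSq, smul_add, smul_add, add_comm, ← add_assoc,
    add_right_comm]
  exact congr($h₂ + $h₁ + $h₀)

variable [FiniteDimensional F U]

lemma AltLenLE.exists_eq_smul_halfSymplecticSq (hU : finrank F U = 6) {Ω : U [⋀^Fin 4]→ₗ[F] F}
    (h₃ : AltLenLE 4 3 Ω) (h₂ : ¬AltLenLE 4 2 Ω) :
    ∃ (c : Basis (Fin 6) F U) (a : F), a ≠ 0 ∧ Ω = a • halfSymplecticSq c.coord := by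
  obtain ⟨vol, hvol⟩ := exists_alternating_ne_zero hU
  obtain ⟨x, y, rfl⟩ := h₃.exists_eq_sum_toBilin (k := 4) hU hvol
  have hxy : LinearIndependent F (Sum.elim x y) :=
    linearIndependent_of_not_altLenLE (k := 4) hU vol h₂
  let e : Fin 3 ⊕ Fin 3 ≃ Fin 6 := ⟨Sum.elim ![0, 2, 4] ![1, 3, 5],
    ![.inl 0, .inr 0, .inl 1, .inr 1, .inl 2, .inr 2], by decide, by decide⟩
  obtain ⟨c, hc⟩ : ∃ c : Basis (Fin 6) F U, ∀ i, Sum.elim x y i = c (e i) :=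
    ⟨(basisOfLinearIndependentOfCardEqFinrank hxy (by simp [hU])).reindex e, fun i => by simp⟩
  refine ⟨c, vol c, mt (AlternatingMap.map_basis_eq_zero_iff c vol).1 hvol, ?_⟩
  rw [← sum_toBilin_contract_basis]
  exact Finset.sum_congr rfl fun i _ => congr(toBilin _ $(hc (.inl i)) $(hc (.inr i)))

end NormalForm

section Nondegeneracy

variable {F : Type*} [Field F] {V N : Type*} [AddCommGroup V] [Module F V]
  [AddCommGroup N] [Module F N]

/-- The pairing of a three-form with the trivector
`c₄₅₆ + c₂₃₆ + c₀₁₆ + c₀₂₄ - c₀₃₅ - c₁₂₅ - c₁₃₄` of `G₂`, where `cᵢⱼₖ = cᵢ ∧ cⱼ ∧ cₖ`. -/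
def g2Pairing (c : Fin 7 → V) (T : V [⋀^Fin 3]→ₗ[F] N) : N :=
  T ![c 4, c 5, c 6] + T ![c 2, c 3, c 6] + T ![c 0, c 1, c 6] + T ![c 0, c 2, c 4] -
    T ![c 0, c 3, c 5] - T ![c 1, c 2, c 5] - T ![c 1, c 3, c 4]

/-- The seven-dimensional cross product, that is, the covector obtained by contracting the
trivector of `g2Pairing` with two covectors. -/
def crossProd (p q : Fin 7 → F) : Fin 7 → F :=
  let m i j := p i * q j - p j * q i
  ![m 1 6 + m 2 4 - m 3 5, m 6 0 - m 2 5 - m 3 4, m 3 6 + m 4 0 - m 5 1,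
    m 6 2 - m 5 0 - m 4 1, m 5 6 + m 0 2 - m 1 3, m 6 4 - m 0 3 - m 1 2, m 4 5 + m 2 3 + m 0 1]

lemma g2Pairing_wedgeCov (c : Fin 7 → V) (φ : Fin 3 → Dual F V) :
    g2Pairing c (wedgeCov 3 φ) = crossProd (φ 0 ∘ c) (φ 1 ∘ c) ⬝ᵥ (φ 2 ∘ c) := by
  have h (x : Fin 3 → V) : wedgeCov 3 φ x = (Matrix.of fun i j => φ j (x i)).det := rfl
  simp only [g2Pairing, h, Matrix.det_fin_three, Matrix.of_apply, dotProduct, Fin.sum_univ_seven,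
    crossProd, Function.comp_apply, Matrix.cons_val]
  ring

lemma crossProd_dotProduct_self (p q : Fin 7 → F) :
    crossProd p q ⬝ᵥ crossProd p q = (p ⬝ᵥ p) * (q ⬝ᵥ q) - (p ⬝ᵥ q) ^ 2 := by
  simp only [dotProduct, Fin.sum_univ_seven, crossProd, Matrix.cons_val]
  ring

lemma bw_eq_sign_smul_contract {b : Basis (Fin 7) F (Dual F V)} {c : Basis (Fin 7) F V}
    (hc : c.coord = b) (π : Equiv.Perm (Fin 7)) :
    bw b (π 3) (π 4) (π 5) (π 6) =
      π.sign • contract (m := 3) (k := 4) c.det ![c (π 0), c (π 1), c (π 2)] := by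
  have hl : ![c (π 0), c (π 1), c (π 2)] = c ∘ π ∘ Fin.castAdd 4 := List.ofFn_injective rfl
  have hr : ![b (π 3), b (π 4), b (π 5), b (π 6)] = b ∘ π ∘ Fin.natAdd 3 :=
    List.ofFn_injective rfl
  rw [bw, hl, hr, contract_basis_perm (m := 3) (k := 4), c.det_self, hc, one_smul, smul_smul,
    Int.units_mul_self, one_smul]

lemma stdG2_eq_g2Pairing {b : Basis (Fin 7) F (Dual F V)} {c : Basis (Fin 7) F V}
    (hc : c.coord = b) : stdG2 b = g2Pairing c (contract (m := 3) (k := 4) c.det) := by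
  have h (π : Equiv.Perm (Fin 7)) (s : ℤˣ) (hπ : π.sign = s) :
      bw b (π 3) (π 4) (π 5) (π 6) =
        s • contract (m := 3) (k := 4) c.det ![c (π 0), c (π 1), c (π 2)] :=
    hπ ▸ bw_eq_sign_smul_contract hc π
  have h₁ := h ⟨![4, 5, 6, 0, 1, 2, 3], ![3, 4, 5, 6, 0, 1, 2], by decide, by decide⟩ 1 (by decide)
  have h₂ := h ⟨![2, 3, 6, 0, 1, 4, 5], ![3, 4, 0, 1, 5, 6, 2], by decide, by decide⟩ 1 (by decide)
  have h₃ := h ⟨![0, 1, 6, 2, 3, 4, 5], ![0, 1, 3, 4, 5, 6, 2], by decide, by decide⟩ 1 (by decide)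
  have h₄ := h ⟨![0, 2, 4, 1, 3, 5, 6], ![0, 3, 1, 4, 2, 5, 6], by decide, by decide⟩ (-1)
    (by decide)
  have h₅ := h ⟨![0, 3, 5, 1, 2, 4, 6], ![0, 3, 4, 1, 5, 2, 6], by decide, by decide⟩ (-1)
    (by decide)
  have h₆ := h ⟨![1, 2, 5, 0, 3, 4, 6], ![3, 0, 1, 4, 5, 2, 6], by decide, by decide⟩ (-1)
    (by decide)
  have h₇ := h ⟨![1, 3, 4, 0, 2, 5, 6], ![3, 0, 4, 1, 2, 5, 6], by decide, by decide⟩ (-1)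
    (by decide)
  simp only [Equiv.coe_fn_mk, Matrix.cons_val, one_smul, Units.neg_smul] at h₁ h₂ h₃ h₄ h₅ h₆ h₇
  rw [stdG2, h₁, h₂, h₃, h₄, h₅, h₆, h₇, g2Pairing]
  abel

lemma stdG2_apply_basis_natAdd {b : Basis (Fin 7) F (Dual F V)} {c : Basis (Fin 7) F V}
    (hc : c.coord = b) (d : Basis (Fin (3 + 4)) F V) :
    stdG2 b (d ∘ Fin.natAdd 3) = c.det d * g2Pairing c (wedgeCov 3 (d.coord ∘ Fin.castAdd 4)) := by
  have h := contract_apply_basis_natAdd (m := 3) (k := 4) d c.det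
  simp only [stdG2_eq_g2Pairing hc, g2Pairing, AlternatingMap.add_apply, AlternatingMap.sub_apply,
    h, mul_add, mul_sub]

end Nondegeneracy

section Definite

variable {F : Type*} [Field F] [LinearOrder F] [IsStrictOrderedRing F]
  {V : Type*} [AddCommGroup V] [Module F V]

lemma crossProd_dotProduct_self_ne_zero {p q : Fin 7 → F} (hpq : LinearIndependent F ![p, q]) :
    crossProd p q ⬝ᵥ crossProd p q ≠ 0 := by
  intro h
  have hw : ((q ⬝ᵥ q) • p - (p ⬝ᵥ q) • q) ⬝ᵥ ((q ⬝ᵥ q) • p - (p ⬝ᵥ q) • q) = 0 := by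
    rw [crossProd_dotProduct_self] at h
    simp only [sub_dotProduct, dotProduct_sub, smul_dotProduct, dotProduct_smul, smul_eq_mul,
      dotProduct_comm q p]
    linear_combination (q ⬝ᵥ q) * h
  rw [dotProduct_self_eq_zero, sub_eq_add_neg, ← neg_smul] at hw
  have hq : q ⬝ᵥ q = 0 := (LinearIndependent.pair_iff.1 hpq _ _ hw).1
  exact hpq.ne_zero 1 (dotProduct_self_eq_zero.1 hq)

variable [FiniteDimensional F V]

lemma exists_stdG2_apply_ne_zero (b : Basis (Fin 7) F (Dual F V)) {θ β : Dual F V}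
    (hθβ : LinearIndependent F ![θ, β]) :
    ∃ v : Fin 4 → V, (∀ i, θ (v i) = 0 ∧ β (v i) = 0) ∧ stdG2 b v ≠ 0 := by
  obtain ⟨c, hc⟩ := exists_basis_coord_eq b
  have hpq : LinearIndependent F ![θ ∘ c, β ∘ c] := by
    have h := hθβ.map' (c.constr F).symm.toLinearMap (LinearEquiv.ker _)
    rwa [show _ ∘ ![θ, β] = ![⇑θ ∘ c, ⇑β ∘ c] from List.ofFn_injective rfl] at h
  let γ : Dual F V := c.constr F (crossProd (θ ∘ c) (β ∘ c))
  have hpair : g2Pairing c (wedgeCov 3 ![θ, β, γ]) ≠ 0 := by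
    have hγ : γ ∘ c = crossProd (θ ∘ c) (β ∘ c) := funext (c.constr_basis F _)
    rw [g2Pairing_wedgeCov]
    simpa [hγ] using crossProd_dotProduct_self_ne_zero hpq
  have hLI : LinearIndependent F ![θ, β, γ] := by
    by_contra hdep
    exact hpair (by simp [wedgeCov_eq_zero_of_not_linearIndependent hdep, g2Pairing])
  obtain ⟨d', hd'⟩ := exists_basis_coord_inl (ι := Fin 3) (κ := Fin 4)
    (finrank_eq_card_basis c) hLI
  let d : Basis (Fin (3 + 4)) F V := d'.reindex finSumFinEquiv
  have hd (i : Fin 3) : d.coord (i.castAdd 4) = ![θ, β, γ] i := by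
    ext v
    rw [← hd', Basis.coord_apply, Basis.coord_apply, Basis.repr_reindex_apply,
      finSumFinEquiv_symm_apply_castAdd]
  have hker (i : Fin 3) (j : Fin 4) : ![θ, β, γ] i (d (j.natAdd 3)) = 0 := by
    rw [← hd, Basis.coord_apply, Basis.repr_self, Finsupp.single_apply_eq_zero]
    exact fun h => absurd h (castAdd_ne_natAdd i j)
  refine ⟨d ∘ Fin.natAdd 3, fun j => ⟨hker 0 j, hker 1 j⟩, ?_⟩
  rw [stdG2_apply_basis_natAdd hc, show d.coord ∘ Fin.castAdd 4 = _ from funext hd]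
  exact mul_ne_zero (c.isUnit_det d).ne_zero hpair

end Definite

section Hyperplane

variable {F : Type*} [Field F] {V W : Type*} [AddCommGroup V] [Module F V]
  [AddCommGroup W] [Module F W] {θ : Dual F V} {e : V} {k l : ℕ}

/-- The projection of `V` onto the hyperplane `ker θ` along `e`; pulling back along it identifies
`Λ⁴(ker θ)*` with `Λ⁴Ann(e)`. -/
def kerProj (he : θ e = 1) : V →ₗ[F] LinearMap.ker θ :=
  (LinearMap.id - θ.smulRight e).codRestrict _ fun x => by simp [he]

lemma coe_kerProj (he : θ e = 1) (x : V) : (kerProj he x : V) = x - θ x • e := rfl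

lemma kerProj_self (he : θ e = 1) : kerProj he e = 0 := by
  ext
  simp [coe_kerProj, he]

lemma kerProj_comp_subtype (he : θ e = 1) :
    kerProj he ∘ₗ (LinearMap.ker θ).subtype = LinearMap.id := by
  ext ⟨x, hx⟩
  simp [coe_kerProj, LinearMap.mem_ker.1 hx]

lemma altLenLE_compLinearMap_iff {f : V →ₗ[F] W} {s : W →ₗ[F] V} (hfs : f ∘ₗ s = LinearMap.id)
    {X : W [⋀^Fin k]→ₗ[F] F} : AltLenLE k l (X.compLinearMap f) ↔ AltLenLE k l X := by
  refine ⟨fun h => ?_, fun h => h.compLinearMap f⟩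
  have := h.compLinearMap s
  rwa [AlternatingMap.compLinearMap_assoc, hfs, AlternatingMap.compLinearMap_id] at this

lemma altHasLen_compLinearMap_iff {f : V →ₗ[F] W} {s : W →ₗ[F] V} (hfs : f ∘ₗ s = LinearMap.id)
    {X : W [⋀^Fin k]→ₗ[F] F} : AltHasLen k l (X.compLinearMap f) ↔ AltHasLen k l X := by
  simp only [AltHasLen, altLenLE_compLinearMap_iff hfs]

lemma mem4Pow_compLinearMap {S : Submodule F (Dual F V)} {f : V →ₗ[F] W}
    (hf : ∀ φ : Dual F W, φ ∘ₗ f ∈ S) {X : W [⋀^Fin 4]→ₗ[F] F} (hX : AltLenLE 4 l X) :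
    mem4Pow S (X.compLinearMap f) := by
  obtain ⟨Y, hY, rfl⟩ := hX
  rw [sum_compLinearMap]
  refine Submodule.sum_mem _ fun i _ => Submodule.subset_span ?_
  obtain ⟨φ, hφ⟩ := hY i
  exact ⟨fun j => φ j ∘ₗ f, fun j => hf _, by rw [hφ, wedgeCov_compLinearMap]⟩

lemma mem4Pow.compLinearMap_eq (he : θ e = 1) {Ω : V [⋀^Fin 4]→ₗ[F] F}
    (hΩ : mem4Pow (LinearMap.ker (Dual.eval F V e)) Ω) :
    (Ω.compLinearMap (LinearMap.ker θ).subtype).compLinearMap (kerProj he) = Ω := by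
  induction hΩ using Submodule.span_induction with
  | mem _ h =>
    obtain ⟨φ, hφ, rfl⟩ := h
    rw [wedgeCov_compLinearMap, wedgeCov_compLinearMap]
    refine congrArg (wedgeCov 4) (funext fun i => LinearMap.ext fun x => ?_)
    have hφe : φ i e = 0 := hφ i
    simp [coe_kerProj, hφe]
  | zero => rfl
  | add X Y _ _ hX hY => exact congr($hX + $hY)
  | smul a X _ hX => exact congrArg (fun Y : V [⋀^Fin 4]→ₗ[F] F => a • Y) hX

lemma exists_dual_eq_one_ker_eq [FiniteDimensional F V] {S : Submodule F V} (heS : e ∉ S)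
    (hS : finrank F S + 1 = finrank F V) : ∃ θ : Dual F V, θ e = 1 ∧ LinearMap.ker θ = S := by
  obtain ⟨α, hαe, hα⟩ := Submodule.exists_le_ker_of_notMem heS
  have hθ : (α e)⁻¹ • α ≠ 0 := fun h => by simpa [hαe] using congr($h e)
  refine ⟨(α e)⁻¹ • α, inv_mul_cancel₀ hαe, (Submodule.eq_of_le_of_finrank_eq ?_ ?_).symm⟩
  · exact fun x hx => by simp [LinearMap.mem_ker.1 (hα hx)]
  · have := Dual.finrank_ker_add_one_of_ne_zero hθ
    omega

end Hyperplane

section Restriction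

variable {F : Type*} [Field F] {V W : Type*} [AddCommGroup V] [Module F V]
  [AddCommGroup W] [Module F W] {θ : Dual F V} {e : V}

lemma altLenLE_stdG2 (b : Basis (Fin 7) F (Dual F V)) : AltLenLE 4 7 (stdG2 b) := by
  have h (i j k l : Fin 7) : AltDec 4 (bw b i j k l) := ⟨_, rfl⟩
  refine ⟨![bw b 0 1 2 3, bw b 0 1 4 5, bw b 2 3 4 5, (-1 : F) • bw b 1 3 5 6,
    bw b 1 2 4 6, bw b 0 3 4 6, bw b 0 2 5 6], ?_, ?_⟩
  · simp [Fin.forall_fin_succ, h, (h _ _ _ _).smul]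
  · rw [Fin.sum_univ_seven, stdG2]
    ext v
    simp [sub_eq_add_neg]

lemma bw_compLinearMap (b : Basis (Fin 7) F (Dual F V)) (f : W →ₗ[F] V) (i j k l : Fin 7) :
    (bw b i j k l).compLinearMap f =
      wedgeCov 4 ![b i ∘ₗ f, b j ∘ₗ f, b k ∘ₗ f, b l ∘ₗ f] := by
  rw [bw, wedgeCov_compLinearMap]
  exact congrArg (wedgeCov 4) (List.ofFn_injective rfl)

lemma bw_compLinearMap_eq_zero {b : Basis (Fin 7) F (Dual F V)} {f : W →ₗ[F] V} {l : Fin 7}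
    (hl : b l ∘ₗ f = 0) (i j k : Fin 7) : (bw b i j k l).compLinearMap f = 0 := by
  rw [bw_compLinearMap, hl]
  exact wedgeCov_eq_zero_of_not_linearIndependent fun h => h.ne_zero 3 rfl

lemma exists_stdG2_comp_ker_subtype_eq (he : θ e = 1)
    (c : Basis (Fin 6) F (LinearMap.ker θ)) :
    ∃ b : Basis (Fin 7) F (Dual F V),
      (stdG2 b).compLinearMap (LinearMap.ker θ).subtype = halfSymplecticSq c.coord := by
  have hzero (a : F) (x : V) (hx : x ∈ LinearMap.ker θ) (h : a • e + x = 0) : a = 0 := by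
    simpa [he, LinearMap.mem_ker.1 hx] using congr(θ $h)
  let B := Basis.mkFinSnoc c e hzero fun z => ⟨-θ z, by simp [he]⟩
  have hB : ⇑B = Fin.snoc ((↑) ∘ c) e := Basis.coe_mkFinSnoc ..
  have hBc (j : Fin 6) : (c j : V) = B j.castSucc := by
    rw [hB, Fin.snoc_castSucc]
    rfl
  have hlast : B.dualBasis 6 ∘ₗ (LinearMap.ker θ).subtype = 0 := by
    refine c.ext fun j => ?_
    have hj : j.castSucc ≠ 6 := j.castSucc_lt_last.ne
    simp [hBc, hj]
  have hcoord (i : Fin 6) : B.dualBasis i.castSucc ∘ₗ (LinearMap.ker θ).subtype = c.coord i := by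
    refine c.ext fun j => ?_
    simp [hBc, Finsupp.single_apply]
  have hbw (i j k l : Fin 6) :
      (bw B.dualBasis i.castSucc j.castSucc k.castSucc l.castSucc).compLinearMap
        (LinearMap.ker θ).subtype = wedgeCov 4 ![c.coord i, c.coord j, c.coord k, c.coord l] := by
    simp only [bw_compLinearMap, hcoord]
  refine ⟨B.dualBasis, ?_⟩
  ext v
  have hzero i j k : bw B.dualBasis i j k 6 (fun m => (LinearMap.ker θ).subtype (v m)) = 0 :=
    congr($(bw_compLinearMap_eq_zero hlast i j k) v)
  simp only [stdG2, AlternatingMap.compLinearMap_apply, AlternatingMap.add_apply,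
    AlternatingMap.sub_apply, hzero, add_zero, sub_zero]
  exact congr(($(hbw 0 1 2 3) + $(hbw 0 1 4 5) + $(hbw 2 3 4 5)) v)

variable [LinearOrder F] [IsStrictOrderedRing F] [FiniteDimensional F V]

lemma altHasLen_stdG2_comp_ker_subtype (he : θ e = 1) (b : Basis (Fin 7) F (Dual F V)) :
    AltHasLen 4 3 ((stdG2 b).compLinearMap (LinearMap.ker θ).subtype) := by
  have hker : finrank F (LinearMap.ker θ) = 6 := by
    have hV : finrank F V = 7 := Subspace.dual_finrank_eq.symm.trans (finrank_eq_card_basis b)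
    have := Dual.finrank_ker_add_one_of_ne_zero (f := θ) (by rintro rfl; simp at he)
    omega
  refine ⟨((altLenLE_stdG2 b).compLinearMap _).of_finrank_lt (k := 4) hker (by omega) (by omega),
    fun j hj hlen => ?_⟩
  obtain ⟨α, hα, hzero⟩ := hlen.exists_ker_vanishing (m := 2) (k := 4) hker (by omega)
  have hLI : LinearIndependent F ![θ, α ∘ₗ kerProj he] := by
    refine LinearIndependent.pair_iff.2 fun s t hst => ?_
    have hs : s = 0 := by simpa [kerProj_self, he] using congr($hst e)
    refine ⟨hs, by_contra fun ht => hα ?_⟩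
    ext x
    have hx : kerProj he x = x := congr($(kerProj_comp_subtype he) x)
    simpa [hs, ht, hx] using congr($hst x)
  obtain ⟨v, hv, hne⟩ := exists_stdG2_apply_ne_zero b hLI
  let w (i : Fin 4) : LinearMap.ker θ := ⟨v i, (hv i).1⟩
  refine hne (hzero w fun i => ?_)
  have hw : kerProj he (v i) = w i := congr($(kerProj_comp_subtype he) (w i))
  exact hw ▸ (hv i).2

end Restriction


theorem stmt13_general {F : Type*} [Field F] [LinearOrder F] [IsStrictOrderedRing F] {g : Type*}
    [LieRing g] [LieAlgebra F g] (hg : finrank F g = 7)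
    (u : LieIdeal F g) (habel : ∀ x ∈ u, ∀ y ∈ u, ⁅x, y⁆ = (0 : g))
    (hu : finrank F ↥u = 6) (e₇ : g) (he : e₇ ∉ u) :
    (∃ Ψ : g [⋀^Fin 4]→ₗ[F] F, ceDiff 3 ⇑Ψ = 0 ∧
        ∃ b : Basis (Fin 7) F (Dual F g), Ψ = stdG2 b) ↔
      (∃ Ω : g [⋀^Fin 4]→ₗ[F] F, ceDiff 3 ⇑Ω = 0 ∧
        mem4Pow (LinearMap.ker (Dual.eval F g e₇)) Ω ∧ AltHasLen 4 3 Ω) := by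
  have : FiniteDimensional F g := .of_finrank_pos (by omega)
  obtain ⟨θ, hθ, hker⟩ := exists_dual_eq_one_ker_eq (S := u.toSubmodule) he
    (hg ▸ congrArg (· + 1) hu)
  have hmem {x} (hx : θ x = 0) : x ∈ u := hker.le hx
  have hcongr {ρ σ : g [⋀^Fin 4]→ₗ[F] F} := ceDiff_congr (ρ := ρ) (σ := σ) hθ
    (fun x y hx hy => habel x (hmem hx) y (hmem hy))
    (fun x hx => hker.ge (lie_mem_right F g u e₇ x (hmem hx)))
  have hP := kerProj_comp_subtype hθ
  constructor
  · rintro ⟨_, hΨ, b, rfl⟩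
    have hlen := altHasLen_stdG2_comp_ker_subtype hθ b
    refine ⟨_, (hcongr ?_).trans hΨ, mem4Pow_compLinearMap (f := kerProj hθ) (fun φ => ?_) hlen.1,
      (altHasLen_compLinearMap_iff hP).2 hlen⟩
    · rw [AlternatingMap.compLinearMap_assoc, hP, AlternatingMap.compLinearMap_id]
    · simp [kerProj_self]
  · rintro ⟨Ω, hΩ, hmemΩ, hlen⟩
    rw [← hmemΩ.compLinearMap_eq hθ, altHasLen_compLinearMap_iff hP] at hlen
    obtain ⟨c, a, ha, hc⟩ :=
      hlen.1.exists_eq_smul_halfSymplecticSq (hker ▸ hu) (hlen.2 2 (by decide))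
    obtain ⟨b, hb⟩ := exists_stdG2_comp_ker_subtype_eq hθ c
    have hbΩ := hb.trans ((inv_smul_smul₀ ha _).symm.trans congr(a⁻¹ • $hc.symm))
    refine ⟨stdG2 b, (hcongr (σ := a⁻¹ • Ω) hbΩ).trans ?_, b, rfl⟩
    exact (ceDiff_smul 3 a⁻¹ Ω).trans (by rw [hΩ, smul_zero])

/-- Let `g` be a seven-dimensional real Lie algebra with a
six-dimensional abelian ideal `u` and `e₇ ∈ g ∖ u`.  Then `g` admits a cocalibrated
`G₂`-structure (a closed four-form of the standard type `stdG2`) iff there is a closed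
four-form `Ω ∈ Λ⁴Ann(span e₇)` of length `3`. -/
theorem stmt13 {g : Type*} [LieRing g] [LieAlgebra ℝ g] [FiniteDimensional ℝ g]
    (hg : finrank ℝ g = 7)
    (u : LieIdeal ℝ g) (habel : ∀ x ∈ u, ∀ y ∈ u, ⁅x, y⁆ = (0 : g))
    (hu : finrank ℝ ↥u = 6) (e₇ : g) (he : e₇ ∉ u) :
    (∃ Ψ : g [⋀^Fin 4]→ₗ[ℝ] ℝ, ceDiff 3 ⇑Ψ = 0 ∧
        ∃ b : Basis (Fin 7) ℝ (Module.Dual ℝ g), Ψ = stdG2 b) ↔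
      (∃ Ω : g [⋀^Fin 4]→ₗ[ℝ] ℝ, ceDiff 3 ⇑Ω = 0 ∧
        mem4Pow (LinearMap.ker (Module.Dual.eval ℝ g e₇)) Ω ∧ AltHasLen 4 3 Ω) := by
  exact stmt13_general hg u habel hu e₇ he
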